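/- Let p be a prime, let l ≥ 0 and n ≥ 0 be integers with n > l·p, and let r be an integer. Then F^{(l)}_p(n,r) ≡ (−1)^l·binom(⌊(n−l−1)/(p−1)⌋, l)·F_p(n−lp, r) (mod p). -/

import Mathlib

open Finset

/-- `x ≡ y (mod p^c)` for rationals: `x = y` or the `p`-adic valuation of `x - y`
is at least `c`. -/
def modCong (p : ℕ) (c : ℤ) (x y : ℚ) : Prop :=
  x = y ∨ c ≤ padicValRat p (x - y)

/-- The binomial coefficient `binom(x,l) = x(x-1)⋯(x-l+1)/l!` for an integer `x`. -/
def intBinom (x : ℤ) (l : ℕ) : ℚ := (∏ i ∈ Finset.range l, ((x:ℚ) - (i:ℚ))) / (l.factorial : ℚ)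

/-- The extended Fleck quotient
`F^{(l)}_{p^a}(n,r) = (-p)^{-⌊(n - l p^a - p^{a-1})/φ(p^a)⌋}
  ∑_{0 ≤ k ≤ n, k ≡ r (mod p^a)} (-1)^k binom(n,k) binom((k-r)/p^a, l)`. -/
noncomputable def Fpa (p a l n : ℕ) (r : ℤ) : ℚ :=
  (-(p:ℚ)) ^ (-(Int.fdiv ((n:ℤ) - (l:ℤ) * (p:ℤ)^a - (p:ℤ)^(a-1)) (Nat.totient (p^a)))) *
    ∑ k ∈ Finset.range (n+1),
      if ((k:ℤ) - r) % ((p:ℤ)^a) = 0 then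
        (-1:ℚ)^k * (n.choose k : ℚ) * intBinom (((k:ℤ) - r) / ((p:ℤ)^a)) l
      else 0

/-- The Fleck quotient `F_p(n,r) = (-p)^{-⌊(n-1)/(p-1)⌋}
`∑_{0 ≤ k ≤ n, k ≡ r (mod p)} (-1)^k binom(n,k) + [n = 0] = F^{(0)}_p(n,r) + [n = 0]`. -/
noncomputable def Fp (p n : ℕ) (r : ℤ) : ℚ :=
  (-(p:ℚ)) ^ (-(Int.fdiv ((n:ℤ) - 1) ((p:ℤ) - 1))) *
    (∑ k ∈ range (n+1), if ((k : ℤ) - r) % p = 0 then (-1 : ℚ)^k * (n.choose k) else 0)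
  + (if n = 0 then 1 else 0)

/-!
Let `E` be the shift of sequences, and let `w_l` be the sequence equal to `binom((k - r) / p, l)` at
`k ≡ r (mod p)` and to `0` elsewhere. Then `(E^p - 1) w_{l+1} = w_l` and `(E^p - 1) w_0 = 0`, while
the sum in the Fleck quotient is the value of `(1 - E)^n w_l` at `0`.

Put `x = 1 - E` and `y = 1 - E^p = 1 - (1 - x)^p`. As `p` is prime, `y = x v` with
`v = x^(p-1) + p t`, that is, `x^(p-1) = v - p t`. In the expansion of
`x^(l+1) (x^(p-1))^(e+l) = x^(l+1) (v - p t)^(e+l)` every term except the one in `v^l (p t)^e` is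
divisible by `y^(l+1)` or by `p^(e+1)`, and the case `l = 0` evaluates the remaining one. Hence
`x^(m + l p) ≡ binom(e + l, l) x^m y^l` modulo `y^(l+1)` and `p^(e+1)` whenever `m > e (p - 1)`.
Now apply both sides to `w_l` and use `y^l w_l = (-1)^l w_0` and `y^(l+1) w_l = 0`.
-/

section CommRing

variable {R : Type*} [CommRing R]

lemma add_pow_sub_choose_mul_mem_span_pair (x y : R) (m n : ℕ) :
    (x + y) ^ (n + m) - (n + m).choose m * x ^ m * y ^ n ∈
      Ideal.span {x ^ (m + 1), y ^ (n + 1)} := by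
  have hm : m ∈ range (n + m + 1) := by simp
  rw [add_pow, ← add_sum_erase _ _ hm, Nat.add_sub_cancel,
    show x ^ m * y ^ n * ((n + m).choose m : R) = (n + m).choose m * x ^ m * y ^ n by ring,
    add_sub_cancel_left]
  refine sum_mem fun k hk => Ideal.mul_mem_right _ _ ?_
  obtain hlt | hgt := (ne_of_mem_erase hk).lt_or_gt
  · have hy : n + 1 ≤ n + m - k := by omega
    exact Ideal.mul_mem_left _ _ <|
      Ideal.mem_of_dvd _ (pow_dvd_pow y hy) (Ideal.subset_span (by simp))
  · exact Ideal.mul_mem_right _ _ <|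
      Ideal.mem_of_dvd _ (pow_dvd_pow x hgt) (Ideal.subset_span (by simp))

lemma pow_mul_add_pow_sub_mem_span_pair (x v c : R) (l e : ℕ) :
    x ^ (l + 1) * (v + c) ^ (e + l) - (e + l).choose l * (x * (v + c) ^ e) * (x * v) ^ l ∈
      Ideal.span {(x * v) ^ (l + 1), c ^ (e + 1)} := by
  obtain ⟨a, b, hab⟩ := Ideal.mem_span_pair.mp (add_pow_sub_choose_mul_mem_span_pair v c l e)
  obtain ⟨a₀, b₀, hab₀⟩ := Ideal.mem_span_pair.mp (add_pow_sub_choose_mul_mem_span_pair v c 0 e)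
  simp only [zero_add, add_zero, pow_one, pow_zero, Nat.choose_zero_right, Nat.cast_one, one_mul]
    at hab₀
  refine Ideal.mem_span_pair.mpr
    ⟨a - (e + l).choose l * a₀, x ^ (l + 1) * (b - (e + l).choose l * v ^ l * b₀), ?_⟩
  linear_combination x ^ (l + 1) * hab - (e + l).choose l * x ^ (l + 1) * v ^ l * hab₀

variable {p : ℕ}

lemma exists_one_sub_one_sub_pow_prime_eq (hp : p.Prime) (x : R) :
    ∃ t, 1 - (1 - x) ^ p = x * (x ^ (p - 1) + p * t) := by
  obtain rfl | hodd := hp.eq_two_or_odd'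
  · exact ⟨1 - x, by push_cast; ring⟩
  · obtain ⟨t, ht⟩ := exists_add_pow_prime_eq hp 1 (-x)
    refine ⟨t, ?_⟩
    rw [mul_add, mul_pow_sub_one hp.ne_zero, sub_eq_add_neg 1 x, ht, hodd.neg_pow]
    ring

lemma pow_sub_choose_mul_mem_span_pair (hp : p.Prime) (x : R) (l : ℕ) {e m : ℕ}
    (hm : e * (p - 1) < m) :
    x ^ (m + l * p) - (e + l).choose l * x ^ m * (1 - (1 - x) ^ p) ^ l ∈
      Ideal.span {(1 - (1 - x) ^ p) ^ (l + 1), (p : R) ^ (e + 1)} := by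
  obtain ⟨s, rfl⟩ := Nat.exists_eq_add_of_lt hm
  obtain ⟨t, ht⟩ := exists_one_sub_one_sub_pow_prime_eq hp x
  set v := x ^ (p - 1) + p * t with hv
  have hvt : v + -(p * t) = x ^ (p - 1) := by rw [hv, add_neg_cancel_right]
  have hspan : Ideal.span {(x * v) ^ (l + 1), (-(p * t)) ^ (e + 1)} ≤
      Ideal.span {(x * v) ^ (l + 1), (p : R) ^ (e + 1)} := by
    rw [Ideal.span_le, Set.pair_subset_iff]
    have hdvd : (p : R) ^ (e + 1) ∣ (-(p * t)) ^ (e + 1) :=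
      pow_dvd_pow_of_dvd (dvd_mul_right _ t).neg_right _
    exact ⟨Ideal.subset_span (by simp), Ideal.mem_of_dvd _ hdvd (Ideal.subset_span (by simp))⟩
  have key := Ideal.mul_mem_left _ (x ^ s) <|
    hspan (pow_mul_add_pow_sub_mem_span_pair x v (-(p * t)) l e)
  have hexp : e * (p - 1) + s + 1 + l * p = s + (l + 1) + (p - 1) * (e + l) := by
    obtain ⟨q, rfl⟩ := Nat.exists_eq_add_of_lt hp.pos
    simp only [Nat.add_sub_cancel]
    ring
  rw [ht, hexp]
  convert key using 1
  rw [hvt]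
  ring

end CommRing

section Umbral

open Polynomial

variable {R : Type*} [CommRing R]

/-- The umbral functional of a sequence `w`: the linear functional on polynomials sending `X ^ k`
to `w k`. Multiplication of the argument by `X` corresponds to shifting `w`. -/
noncomputable def umbral (w : ℕ → R) : R[X] →ₗ[R] R :=
  Polynomial.lsum fun k => LinearMap.toSpanSingleton R R (w k)

lemma umbral_monomial (w : ℕ → R) (k : ℕ) (a : R) : umbral w (monomial k a) = a * w k := by
  simp [umbral, Polynomial.lsum, sum_monomial_index]

lemma umbral_zero (f : R[X]) : umbral (fun _ => 0) f = 0 := by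
  simp [umbral, Polynomial.lsum, Polynomial.sum_def]

lemma umbral_X_pow_sub_one_mul (w : ℕ → R) (j : ℕ) (f : R[X]) :
    umbral w ((X ^ j - 1) * f) = umbral (fun k => w (k + j) - w k) f := by
  induction f using Polynomial.induction_on' with
  | add f g hf hg => rw [mul_add, map_add, map_add, hf, hg]
  | monomial k a =>
    rw [sub_mul, one_mul, X_pow_mul_monomial, map_sub]
    simp only [umbral_monomial, mul_sub]

lemma umbral_one_sub_X_pow (w : ℕ → R) (n : ℕ) :
    umbral w ((1 - X) ^ n) = ∑ k ∈ range (n + 1), (-1) ^ k * n.choose k * w k := by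
  have hexpand : (1 - X : R[X]) ^ n =
      ∑ k ∈ range (n + 1), monomial k ((-1) ^ k * (n.choose k : R)) := by
    rw [sub_eq_neg_add, add_pow]
    refine sum_congr rfl fun k _ => ?_
    rw [← C_mul_X_pow_eq_monomial, neg_pow]
    simp only [one_pow, mul_one, map_mul, map_pow, map_neg, map_one, map_natCast]
    ring
  simp only [hexpand, map_sum, umbral_monomial]

end Umbral

section FleckSum

open Polynomial

/-- The function `x ↦ binom(x / p, l)` on the multiples of `p`, extended by zero to `ℤ`. -/
def multipleChoose (p l : ℕ) (x : ℤ) : ℤ :=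
  if (p : ℤ) ∣ x then Ring.choose (x / p) l else 0

/-- The integer numerator of the extended Fleck quotient `F^{(l)}_p(n,r)`. -/
def fleckSum (p l n : ℕ) (r : ℤ) : ℤ :=
  ∑ k ∈ range (n + 1), (-1) ^ k * n.choose k * multipleChoose p l (k - r)

variable {p : ℕ}

lemma multipleChoose_zero_add_self (x : ℤ) : multipleChoose p 0 (x + p) = multipleChoose p 0 x := by
  simp only [multipleChoose, dvd_add_self_right, Ring.choose_zero_right]

lemma multipleChoose_succ_add_self_sub (hp : p ≠ 0) (l : ℕ) (x : ℤ) :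
    multipleChoose p (l + 1) (x + p) - multipleChoose p (l + 1) x = multipleChoose p l x := by
  simp only [multipleChoose, dvd_add_self_right]
  split_ifs with hx
  · rw [Int.add_ediv_of_dvd_left hx, Int.ediv_self (by exact_mod_cast hp), Ring.choose_succ_succ,
      add_sub_cancel_right]
  · rfl

variable (r : ℤ)

lemma umbral_multipleChoose_zero_mul (f : ℤ[X]) :
    umbral (fun k => multipleChoose p 0 (k - r)) ((X ^ p - 1) * f) = 0 := by
  simp only [umbral_X_pow_sub_one_mul, Nat.cast_add, add_sub_right_comm,
    multipleChoose_zero_add_self, sub_self, umbral_zero]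

lemma umbral_multipleChoose_succ_mul (hp : p ≠ 0) (l : ℕ) (f : ℤ[X]) :
    umbral (fun k => multipleChoose p (l + 1) (k - r)) ((X ^ p - 1) * f) =
      umbral (fun k => multipleChoose p l (k - r)) f := by
  simp only [umbral_X_pow_sub_one_mul, Nat.cast_add, add_sub_right_comm,
    multipleChoose_succ_add_self_sub hp]

lemma umbral_multipleChoose_pow_mul (hp : p ≠ 0) (l : ℕ) (f : ℤ[X]) :
    umbral (fun k => multipleChoose p l (k - r)) ((X ^ p - 1) ^ l * f) =
      umbral (fun k => multipleChoose p 0 (k - r)) f := by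
  induction l with
  | zero => rw [pow_zero, one_mul]
  | succ l ih => rw [pow_succ', mul_assoc, umbral_multipleChoose_succ_mul r hp, ih]

theorem pow_dvd_fleckSum_sub (hp : p.Prime) (l : ℕ) {e m : ℕ} (hm : e * (p - 1) < m) :
    (p : ℤ) ^ (e + 1) ∣
      fleckSum p l (m + l * p) r - (-1) ^ l * (e + l).choose l * fleckSum p 0 m r := by
  set L := fun j => umbral fun k => multipleChoose p j (k - r)
  have hL (j n : ℕ) : L j ((1 - X) ^ n) = fleckSum p j n r := umbral_one_sub_X_pow _ n
  have hred (f : ℤ[X]) : L l ((X ^ p - 1) ^ l * f) = L 0 f :=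
    umbral_multipleChoose_pow_mul r hp.ne_zero l f
  have hkill (f : ℤ[X]) : L l ((X ^ p - 1) ^ (l + 1) * f) = 0 := by
    rw [pow_succ, mul_assoc, hred, umbral_multipleChoose_zero_mul]
  obtain ⟨a, b, hab⟩ := Ideal.mem_span_pair.mp <|
    pow_sub_choose_mul_mem_span_pair hp (1 - X : ℤ[X]) l hm
  rw [sub_sub_cancel, ← neg_sub (X ^ p) 1, neg_pow, neg_pow (X ^ p - 1 : ℤ[X])] at hab
  refine ⟨L l b, ?_⟩
  calc fleckSum p l (m + l * p) r - (-1) ^ l * (e + l).choose l * fleckSum p 0 m r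
      = L l ((1 - X) ^ (m + l * p) -
          ((-1) ^ l * (e + l).choose l : ℤ) • ((X ^ p - 1) ^ l * (1 - X) ^ m)) := by
        rw [map_sub, map_smul, hred, hL, hL, smul_eq_mul]
    _ = L l ((X ^ p - 1) ^ (l + 1) * ((-1) ^ (l + 1) * a) + ((p : ℤ) ^ (e + 1)) • b) := by
        congr 1
        simp only [zsmul_eq_mul]
        push_cast
        linear_combination -hab
    _ = (p : ℤ) ^ (e + 1) * L l b := by rw [map_add, map_smul, hkill, zero_add, smul_eq_mul]

end FleckSum

section FleckQuotient

variable {p : ℕ}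

lemma intBinom_eq_choose (x : ℤ) (l : ℕ) : intBinom x l = Ring.choose x l := by
  have h := Ring.descPochhammer_eq_factorial_smul_choose x l
  rw [← Polynomial.eval_eq_smeval, descPochhammer_eval_eq_prod_range, nsmul_eq_mul] at h
  rw [intBinom, div_eq_iff (by exact_mod_cast l.factorial_ne_zero), mul_comm]
  exact_mod_cast h

lemma Fpa_one_eq (hp : p.Prime) (l : ℕ) {m : ℕ} (hm : 0 < m) (r : ℤ) :
    Fpa p 1 l (m + l * p) r =
      (-(p : ℚ)) ^ (-(((m - 1) / (p - 1) : ℕ) : ℤ)) * fleckSum p l (m + l * p) r := by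
  have hfloor : Int.fdiv (((m + l * p : ℕ) : ℤ) - l * (p : ℤ) ^ 1 - (p : ℤ) ^ (1 - 1))
      (Nat.totient (p ^ 1)) = ((m - 1) / (p - 1) : ℕ) := by
    rw [pow_one, pow_one, Nat.totient_prime hp, Int.fdiv_eq_ediv_of_nonneg _ (Nat.cast_nonneg _)]
    push_cast [hm]
    simp
  rw [Fpa, hfloor, fleckSum]
  simp only [pow_one, intBinom_eq_choose, multipleChoose, Int.dvd_iff_emod_eq_zero, mul_ite,
    mul_zero]
  push_cast
  rfl

lemma Fp_eq_Fpa_zero (hp : p.Prime) {m : ℕ} (hm : m ≠ 0) (r : ℤ) : Fp p m r = Fpa p 1 0 m r := by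
  simp [Fp, Fpa, hm, Nat.totient_prime hp, intBinom, hp.one_le]

lemma add_mul_sub_sub_one_div (hp : 1 < p) (l : ℕ) {m : ℕ} (hm : 0 < m) :
    (m + l * p - l - 1) / (p - 1) = (m - 1) / (p - 1) + l := by
  rw [← Nat.add_mul_div_right _ _ (Nat.sub_pos_of_lt hp), Nat.mul_sub_one]
  have := Nat.le_mul_of_pos_right l (Nat.zero_lt_of_lt hp)
  congr 1
  omega

lemma modCong_of_sub_eq_pow_mul (hp : p.Prime) {c : ℕ} {x y : ℚ} {z : ℤ} (h : x - y = p ^ c * z) :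
    modCong p c x y := by
  have := Fact.mk hp
  refine or_iff_not_imp_left.mpr fun hne => ?_
  have hcast : x - y = ((p ^ c * z : ℤ) : ℚ) := by rw [h]; push_cast; rfl
  have hz : (p ^ c * z : ℤ) ≠ 0 := by
    rw [← sub_eq_zero, hcast] at hne
    exact_mod_cast hne
  rw [hcast, padicValRat.of_int]
  exact_mod_cast ((padicValInt_dvd_iff c _).mp (dvd_mul_right _ z)).resolve_left hz

lemma modCong_neg_zpow_mul_of_pow_dvd_sub (hp : p.Prime) {e c : ℕ} {a b : ℤ}
    (h : (p : ℤ) ^ (e + c) ∣ a - b) :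
    modCong p c ((-(p : ℚ)) ^ (-(e : ℤ)) * a) ((-(p : ℚ)) ^ (-(e : ℤ)) * b) := by
  obtain ⟨z, hz⟩ := h
  have hz' : (a : ℚ) - b = p ^ (e + c) * z := by exact_mod_cast hz
  have hpow : (-(p : ℚ)) ^ (-(e : ℤ)) * p ^ e = (-1) ^ e := by
    have hp₀ : (p : ℚ) ≠ 0 := by exact_mod_cast hp.ne_zero
    rw [zpow_neg, zpow_natCast, inv_mul_eq_iff_eq_mul₀ (pow_ne_zero _ (neg_ne_zero.mpr hp₀)),
      ← mul_pow, neg_mul_neg, mul_one]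
  refine modCong_of_sub_eq_pow_mul hp (z := (-1) ^ e * z) ?_
  calc (-(p : ℚ)) ^ (-(e : ℤ)) * a - (-(p : ℚ)) ^ (-(e : ℤ)) * b
      = ((-(p : ℚ)) ^ (-(e : ℤ)) * p ^ e) * (p ^ c * z) := by rw [← mul_sub, hz', pow_add]; ring
    _ = p ^ c * ((-1) ^ e * z : ℤ) := by rw [hpow]; push_cast; ring

end FleckQuotient

theorem stmt18 (p l n : ℕ) (hp : p.Prime) (hn : l * p < n) (r : ℤ) :
    modCong p 1 (Fpa p 1 l n r)
      ((-1:ℚ)^l * (((n-l-1)/(p-1)).choose l : ℚ) * Fp p (n - l*p) r) := by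
  obtain ⟨m, hm, rfl⟩ : ∃ m, 0 < m ∧ n = m + l * p := ⟨n - l * p, by omega, by omega⟩
  set e := (m - 1) / (p - 1) with he
  have hlt : e * (p - 1) < m :=
    (Nat.div_mul_le_self (m - 1) (p - 1)).trans_lt (Nat.sub_one_lt hm.ne')
  have hFp : Fp p m r = (-(p : ℚ)) ^ (-(e : ℤ)) * fleckSum p 0 m r := by
    simpa only [zero_mul, add_zero, ← Fp_eq_Fpa_zero hp hm.ne' r] using Fpa_one_eq hp 0 hm r
  have hcong := modCong_neg_zpow_mul_of_pow_dvd_sub hp (c := 1) (pow_dvd_fleckSum_sub r hp l hlt)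
  rw [add_mul_sub_sub_one_div hp.one_lt l hm, Nat.add_sub_cancel, Fpa_one_eq hp l hm, ← he, hFp,
    mul_left_comm]
  exact_mod_cast hcong
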